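/- Let G = (U, E) be an undirected graph with U = {u_1, …, u_r}, r ≥ 3, E = {e_1, …, e_s}, s ≥ 1, and let h be an integer with 1 ≤ h ≤ r−1. Consider the partial profile with 2r−1 voters, alternative set A = {p, b, d} ∪ {c_j : e_j ∈ E}, and agenda L: b ▷ d ▷ p ▷ c_s ▷ c_{s−1} ▷ … ▷ c_1 constructed from G and h as described. Then the edge alternative c_1 is the amendment winner under L in every completion of the vertex voters' partial orders if and only if G has no vertex cover of size at most h. -/

import Mathlib

open scoped Classical

/-- The number of voters in profile `prof` who strictly prefer `b` to `c`. -/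
noncomputable def prefCount {α : Type*} {n : ℕ} (prof : Fin n → α → α → Prop) (b c : α) : ℕ :=
  (Finset.univ.filter fun i => prof i b c).card

/-- Alternative `b` beats alternative `c`: more than `n/2` voters prefer `b` to `c`. -/
def Beats {α : Type*} {n : ℕ} (prof : Fin n → α → α → Prop) (b c : α) : Prop :=
  2 * prefCount prof b c > n

/-- `a` is an `S`-majority winner: more than `n/2` voters prefer `a`
to every alternative of `S \ {a}`. -/
def IsMajWinner {α : Type*} {n : ℕ} (prof : Fin n → α → α → Prop) (S : Finset α) (a : α) :
    Prop :=
  2 * (Finset.univ.filter fun i => ∀ c ∈ S, c ≠ a → prof i a c).card > n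

/-- The successive winner for the agenda given as a list: the first alternative of the
agenda that is a majority winner with respect to itself and all later alternatives. -/
noncomputable def succWinner {α : Type*} [DecidableEq α] {n : ℕ}
    (prof : Fin n → α → α → Prop) : List α → Option α
  | [] => none
  | a :: rest =>
    if IsMajWinner prof ((a :: rest).toFinset) a then some a
    else succWinner prof rest

/-- The amendment winner for the agenda given as a list: the current round winner is
challenged by the next alternative on the agenda, which takes over if it beats it. -/
noncomputable def amendWinner {α : Type*} {n : ℕ}
    (prof : Fin n → α → α → Prop) : List α → Option α
  | [] => none
  | a :: rest => some (rest.foldl (fun win c => if Beats prof c win then c else win) a)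

/-- The alternatives of the reduction: the preferred alternative `P`, the helper
alternative `B`, the dummy alternative `D`, and one edge alternative `C j` for each
edge `e_j`. -/
inductive Alt (s : ℕ) : Type
  | P : Alt s
  | B : Alt s
  | D : Alt s
  | C : Fin s → Alt s
  deriving DecidableEq

/-- Edge `j` is incident to vertex `i`. -/
def Inc {r s : ℕ} (e : Fin s → Fin r × Fin r) (i : Fin r) (j : Fin s) : Prop :=
  (e j).1 = i ∨ (e j).2 = i

/-- The strict partial order of the vertex voter `v_i`: the non-incident edge
alternatives (in index order) above everything else, together with the two mutually
incomparable chains `⟨I(u_i)⟩ ≻ d` and `b ≻ p`. -/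
def vVoter {r s : ℕ} (e : Fin s → Fin r × Fin r) (i : Fin r) :
    Alt s → Alt s → Prop := fun x y =>
  match x, y with
  | Alt.C j, Alt.C j' =>
      (¬ Inc e i j ∧ Inc e i j') ∨ (Inc e i j ∧ Inc e i j' ∧ j < j') ∨
        (¬ Inc e i j ∧ ¬ Inc e i j' ∧ j < j')
  | Alt.C _, Alt.D => True
  | Alt.C j, Alt.B => ¬ Inc e i j
  | Alt.C j, Alt.P => ¬ Inc e i j
  | Alt.B, Alt.P => True
  | _, _ => False

/-- The linear order `p ≻ c_1 ≻ … ≻ c_s ≻ b ≻ d` of the first group of auxiliary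
voters. -/
def aux1 {s : ℕ} : Alt s → Alt s → Prop := fun x y =>
  match x, y with
  | Alt.P, Alt.C _ => True
  | Alt.P, Alt.B => True
  | Alt.P, Alt.D => True
  | Alt.C j, Alt.C j' => j < j'
  | Alt.C _, Alt.B => True
  | Alt.C _, Alt.D => True
  | Alt.B, Alt.D => True
  | _, _ => False

/-- The linear order `p ≻ d ≻ c_1 ≻ … ≻ c_s ≻ b` of the second group of auxiliary
voters. -/
def aux2 {s : ℕ} : Alt s → Alt s → Prop := fun x y =>
  match x, y with
  | Alt.P, Alt.C _ => True
  | Alt.P, Alt.B => True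
  | Alt.P, Alt.D => True
  | Alt.D, Alt.C _ => True
  | Alt.D, Alt.B => True
  | Alt.C j, Alt.C j' => j < j'
  | Alt.C _, Alt.B => True
  | _, _ => False

/-- The partial profile of the reduction: `r` vertex voters, `r − h − 1` auxiliary voters
of the first kind, and `h` auxiliary voters of the second kind (`2r − 1` voters). -/
def profile11 (r s h : ℕ) (e : Fin s → Fin r × Fin r) :
    Fin (2 * r - 1) → Alt s → Alt s → Prop := fun idx =>
  if hi : (idx : ℕ) < r then vVoter e ⟨idx, hi⟩
  else if (idx : ℕ) < r + (r - h - 1) then aux1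
  else aux2

/-- The agenda `b ▷ d ▷ p ▷ c_s ▷ c_{s−1} ▷ … ▷ c_1` of the reduction. -/
def agenda11 (s : ℕ) : List (Alt s) :=
  [Alt.B, Alt.D, Alt.P] ++ ((List.finRange s).reverse.map Alt.C)

/- The auxiliary voters are already linear, so a completion amounts to a choice of linear orders for
the `r` vertex voters. In every completion each edge alternative beats all later ones, as well as
`b` and `d`, and `p` does not beat `b`. So `c_1` can lose only if `d` ousts `b`, `p` ousts `d`, and
no edge alternative ousts `p`. By the numbers of auxiliary voters, `d` ousts `b` iff at most `h`
vertex voters prefer `b` to `d`, and `c_j` fails to oust `p` iff some vertex voter prefers `p` to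
`c_j`. Such a voter belongs to an endpoint of `e_j` and has `b ≻ p ≻ c_j ≻ d`. Hence if `c_1`
loses, the vertices whose voters prefer `b` to `d` form a vertex cover of size at most `h`.
Conversely, given such a cover, letting exactly the voters of its vertices rank `b ≻ p` above their
incident edges makes `c_1` lose. -/

section Profiles

variable {ι α : Type*} {n : ℕ}

/-- `comp` is a completion of the partial profile `prof`: every voter's preference is extended to a
linear order. -/
def IsCompletion (prof comp : ι → α → α → Prop) : Prop :=
  ∀ i, IsStrictTotalOrder α (comp i) ∧ ∀ x y, prof i x y → comp i x y

theorem eq_of_trichotomous_of_asymm_of_imp {R R' : α → α → Prop} [Std.Trichotomous R]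
    [Std.Asymm R'] (h : ∀ x y, R x y → R' x y) : R' = R := by
  ext x y
  refine ⟨fun hxy => ?_, h x y⟩
  rcases trichotomous_of R x y with hR | rfl | hR
  · exact hR
  · exact absurd hxy (irrefl_of R' x)
  · exact absurd (h y x hR) (asymm_of R' hxy)

theorem isStrictTotalOrder_lt_of_injective {β : Type*} [LinearOrder β] {f : α → β}
    (hf : Function.Injective f) : IsStrictTotalOrder α fun x y => f x < f y :=
  (RelEmbedding.preimage ⟨f, hf⟩ (· < ·)).isStrictTotalOrder

variable {prof : Fin n → α → α → Prop} {x y : α}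

theorem prefCount_le_card {S : Finset (Fin n)} (hS : ∀ i, prof i x y → i ∈ S) :
    prefCount prof x y ≤ S.card :=
  Finset.card_le_card fun i hi => hS i (Finset.mem_filter.1 hi).2

theorem prefCount_le : prefCount prof x y ≤ n :=
  (prefCount_le_card fun i _ => Finset.mem_univ i).trans_eq (Finset.card_fin n)

theorem prefCount_pos_iff : 0 < prefCount prof x y ↔ ∃ i, prof i x y := by
  simp [prefCount, Finset.card_pos, Finset.filter_nonempty_iff]

theorem prefCount_eq_iff : prefCount prof x y = n ↔ ∀ i, prof i x y := by
  simpa [prefCount] using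
    Finset.card_filter_eq_iff (s := (Finset.univ : Finset (Fin n))) (p := fun i => prof i x y)

theorem prefCount_add_prefCount_swap (hprof : ∀ i, IsStrictTotalOrder α (prof i)) (hxy : x ≠ y) :
    prefCount prof x y + prefCount prof y x = n := by
  have hswap (i : Fin n) : prof i y x ↔ ¬ prof i x y := by
    have := hprof i
    refine ⟨asymm_of (prof i), fun h => ?_⟩
    exact ((trichotomous_of (prof i) x y).resolve_left h).resolve_left hxy
  simp only [prefCount, hswap, Finset.card_filter_add_card_filter_not, Finset.card_fin]

end Profiles

section Amendment

variable {α : Type*} {n : ℕ} {prof : Fin n → α → α → Prop} {w : α} {l : List α}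

theorem amendWinner_cons_cons (w c : α) (l : List α) :
    amendWinner prof (w :: c :: l) =
      amendWinner prof ((if Beats prof c w then c else w) :: l) :=
  rfl

theorem amendWinner_cons_of_forall_not_beats (h : ∀ c ∈ l, ¬ Beats prof c w) :
    amendWinner prof (w :: l) = some w := by
  induction l with
  | nil => rfl
  | cons c l ih =>
    rw [List.forall_mem_cons] at h
    rw [amendWinner_cons_cons, if_neg h.1, ih h.2]

theorem amendWinner_cons_of_exists_beats (hl : l.Pairwise fun x y => Beats prof y x)
    (h : ∃ c ∈ l, Beats prof c w) : amendWinner prof (w :: l) = l.getLast? := by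
  induction l generalizing w with
  | nil => simp at h
  | cons c l ih =>
    rw [List.pairwise_cons] at hl
    rw [amendWinner_cons_cons]
    split_ifs with hcw
    · rcases l with _ | ⟨c', l⟩
      · rfl
      · rw [ih hl.2 ⟨c', List.mem_cons_self, hl.1 c' List.mem_cons_self⟩, List.getLast?_cons_cons]
    · obtain ⟨c', hc', hc'w⟩ : ∃ c' ∈ l, Beats prof c' w := by simpa [hcw] using h
      rw [ih hl.2 ⟨c', hc', hc'w⟩, List.getLast?_cons_of_ne_nil (List.ne_nil_of_mem hc')]

theorem amendWinner_cons_eq_getLast?_iff (hl : l.Pairwise fun x y => Beats prof y x) (hw : w ∉ l) :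
    amendWinner prof (w :: l) = l.getLast? ↔ ∃ c ∈ l, Beats prof c w := by
  refine ⟨fun h => ?_, amendWinner_cons_of_exists_beats hl⟩
  by_contra! hnot
  rw [amendWinner_cons_of_forall_not_beats hnot] at h
  exact hw (List.mem_of_getLast? h.symm)

theorem amendWinner_agenda11_eq_iff {s : ℕ} {prof : Fin n → Alt s → Alt s → Prop} (hs : 1 ≤ s)
    (hCC : ∀ j j', j < j' → Beats prof (.C j) (.C j')) (hCB : ∀ j, Beats prof (.C j) .B)
    (hCD : ∀ j, Beats prof (.C j) .D) (hPB : ¬ Beats prof .P .B) :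
    amendWinner prof (agenda11 s) = some (.C ⟨0, hs⟩) ↔
      ¬ (Beats prof .D .B ∧ Beats prof .P .D ∧ ∀ j, ¬ Beats prof (.C j) .P) := by
  set edges : List (Alt s) := (List.finRange s).reverse.map .C
  have hpairwise : edges.Pairwise fun x y => Beats prof y x := by
    rw [List.pairwise_map, List.pairwise_reverse]
    exact (List.pairwise_lt_finRange s).imp (hCC _ _)
  have hlast : edges.getLast? = some (.C ⟨0, hs⟩) := by
    obtain ⟨s, rfl⟩ := Nat.exists_eq_add_of_le' hs
    simp [edges, List.finRange_succ]
  have hwin (w : Alt s) (hw : ∀ j, w ≠ .C j) :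
      amendWinner prof (w :: edges) = some (.C ⟨0, hs⟩) ↔ ∃ j, Beats prof (.C j) w := by
    rw [← hlast, amendWinner_cons_eq_getLast?_iff hpairwise (by simp [edges, (hw _).symm])]
    simp [edges]
  change amendWinner prof (.B :: .D :: .P :: edges) = _ ↔ _
  rw [amendWinner_cons_cons, amendWinner_cons_cons]
  by_cases hDB : Beats prof .D .B
  · by_cases hPD : Beats prof .P .D
    · simp [hDB, hPD, hwin]
    · simpa [hDB, hPD, hwin] using ⟨_, hCD ⟨0, hs⟩⟩
  · simpa [hDB, hPB, hwin] using ⟨_, hCB ⟨0, hs⟩⟩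

end Amendment

section AuxiliaryVoters

variable {r s h : ℕ}

instance isStrictTotalOrder_aux1 : IsStrictTotalOrder (Alt s) aux1 where
  trichotomous x y := by cases x <;> cases y <;> grind [aux1]
  irrefl x := by cases x <;> simp [aux1]
  trans x y z := by cases x <;> cases y <;> cases z <;> grind [aux1]

instance isStrictTotalOrder_aux2 : IsStrictTotalOrder (Alt s) aux2 where
  trichotomous x y := by cases x <;> cases y <;> grind [aux2]
  irrefl x := by cases x <;> simp [aux2]
  trans x y z := by cases x <;> cases y <;> cases z <;> grind [aux2]

/-- The profile of `2 r - 1` voters consisting of arbitrary vertex voters `v` and the auxiliary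
voters of the reduction, so that `profile11 r s h e` is `addAux h (vVoter e)`. -/
def addAux (h : ℕ) (v : Fin r → Alt s → Alt s → Prop) : Fin (2 * r - 1) → Alt s → Alt s → Prop :=
  fun idx =>
    if hi : (idx : ℕ) < r then v ⟨idx, hi⟩
    else if (idx : ℕ) < r + (r - h - 1) then aux1
    else aux2

variable {u v : Fin r → Alt s → Alt s → Prop} {x y : Alt s}

theorem isCompletion_addAux (huv : IsCompletion u v) :
    IsCompletion (addAux h u) (addAux h v) := by
  intro idx
  unfold addAux
  split_ifs
  · exact huv _
  all_goals exact ⟨inferInstance, fun _ _ => id⟩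

theorem exists_isCompletion_eq_addAux {comp : Fin (2 * r - 1) → Alt s → Alt s → Prop}
    (hcomp : IsCompletion (addAux h u) comp) :
    ∃ v, IsCompletion u v ∧ comp = addAux h v := by
  refine ⟨fun i => comp ⟨i, by omega⟩, fun i => ?_, funext fun idx => ?_⟩
  · simpa [addAux] using hcomp ⟨i, by omega⟩
  · obtain ⟨_, himp⟩ := hcomp idx
    unfold addAux at himp ⊢
    split_ifs at himp ⊢
    · rfl
    all_goals exact eq_of_trichotomous_of_asymm_of_imp himp

theorem prefCount_addAux (hhr : h ≤ r - 1) :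
    prefCount (addAux h v) x y =
      prefCount v x y + (if aux1 x y then r - h - 1 else 0) + (if aux2 x y then h else 0) := by
  have hsize : r + (r - h - 1) + h = 2 * r - 1 := by omega
  simp only [prefCount, Finset.card_filter]
  rw [← (finCongr hsize).sum_comp, Fin.sum_univ_add, Fin.sum_univ_add]
  have hnotlt (k : ℕ) : ¬ r + (r - h - 1) + k < r := by omega
  simp [addAux, hnotlt]

theorem beats_addAux_iff (hr : 0 < r) (hhr : h ≤ r - 1) :
    Beats (addAux h v) x y ↔
      r ≤ prefCount v x y + (if aux1 x y then r - h - 1 else 0) + (if aux2 x y then h else 0) := by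
  rw [Beats, prefCount_addAux hhr]
  omega

theorem beats_addAux_iff_exists (hr : 0 < r) (hhr : h ≤ r - 1) (h₁ : aux1 x y) (h₂ : aux2 x y) :
    Beats (addAux h v) x y ↔ ∃ i, v i x y := by
  rw [beats_addAux_iff hr hhr, if_pos h₁, if_pos h₂, ← prefCount_pos_iff]
  omega

theorem beats_addAux_iff_forall (hr : 0 < r) (hhr : h ≤ r - 1) (h₁ : ¬ aux1 x y)
    (h₂ : ¬ aux2 x y) : Beats (addAux h v) x y ↔ ∀ i, v i x y := by
  rw [beats_addAux_iff hr hhr, if_neg h₁, if_neg h₂, ← prefCount_eq_iff]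
  exact prefCount_le.ge_iff_eq

end AuxiliaryVoters

section VertexVoters

variable {r s h : ℕ} {e : Fin s → Fin r × Fin r} {v : Fin r → Alt s → Alt s → Prop}

/-- `S` is a vertex cover of the graph whose edges are the pairs `e j`. -/
def IsVertexCover {V E : Type*} (e : E → V × V) (S : Finset V) : Prop :=
  ∀ j, (e j).1 ∈ S ∨ (e j).2 ∈ S

theorem isVertexCover_iff_forall_exists_inc {S : Finset (Fin r)} :
    IsVertexCover e S ↔ ∀ j, ∃ i ∈ S, Inc e i j := by
  simp [IsVertexCover, Inc, and_or_left, exists_or]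

theorem exists_not_inc (hr : 3 ≤ r) (e : Fin s → Fin r × Fin r) (j : Fin s) :
    ∃ i, ¬ Inc e i j := by
  obtain ⟨i, -, hi⟩ : ∃ i ∈ Finset.univ, i ∉ ({(e j).1, (e j).2} : Finset (Fin r)) :=
    Finset.exists_mem_notMem_of_card_lt_card <| by
      simpa using Finset.card_le_two.trans_lt hr
  exact ⟨i, by simpa [Inc, eq_comm] using hi⟩

theorem inc_of_prefers_P_C (hv : IsCompletion (vVoter e) v) {i : Fin r} {j : Fin s}
    (hPC : v i .P (.C j)) : Inc e i j := by
  by_contra hinc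
  have := (hv i).1
  exact asymm_of (v i) hPC ((hv i).2 _ _ hinc)

theorem prefers_P_D_of_prefers_P_C (hv : IsCompletion (vVoter e) v) {i : Fin r} {j : Fin s}
    (hPC : v i .P (.C j)) : v i .P .D := by
  have := (hv i).1
  exact trans_of (v i) hPC ((hv i).2 (.C j) .D trivial)

theorem prefers_B_D_of_prefers_P_C (hv : IsCompletion (vVoter e) v) {i : Fin r} {j : Fin s}
    (hPC : v i .P (.C j)) : v i .B .D := by
  have := (hv i).1
  exact trans_of (v i) ((hv i).2 .B .P trivial) (prefers_P_D_of_prefers_P_C hv hPC)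

theorem beats_C_C (hr : 3 ≤ r) (hhr : h ≤ r - 1) (hv : IsCompletion (vVoter e) v) {j j' : Fin s}
    (hj : j < j') : Beats (addAux h v) (.C j) (.C j') := by
  obtain ⟨i, hi⟩ := exists_not_inc hr e j
  refine (beats_addAux_iff_exists (by omega) hhr (by exact hj) (by exact hj)).2 ⟨i, (hv i).2 _ _ ?_⟩
  simp only [vVoter]
  tauto

theorem beats_C_B (hr : 3 ≤ r) (hhr : h ≤ r - 1) (hv : IsCompletion (vVoter e) v) (j : Fin s) :
    Beats (addAux h v) (.C j) .B := by
  obtain ⟨i, hi⟩ := exists_not_inc hr e j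
  exact (beats_addAux_iff_exists (by omega) hhr (by trivial) (by trivial)).2 ⟨i, (hv i).2 _ _ hi⟩

theorem beats_C_D (hr : 0 < r) (hhr : h ≤ r - 1) (hv : IsCompletion (vVoter e) v) (j : Fin s) :
    Beats (addAux h v) (.C j) .D := by
  have hall : prefCount v (.C j) .D = r := prefCount_eq_iff.2 fun i => (hv i).2 _ _ (by trivial)
  rw [beats_addAux_iff hr hhr, hall, add_assoc]
  exact Nat.le_add_right _ _

theorem not_beats_P_B (hr : 0 < r) (hhr : h ≤ r - 1) (hv : IsCompletion (vVoter e) v) :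
    ¬ Beats (addAux h v) .P .B := by
  rw [beats_addAux_iff_exists hr hhr (by trivial) (by trivial)]
  rintro ⟨i, hPB⟩
  have := (hv i).1
  exact asymm_of (v i) hPB ((hv i).2 _ _ trivial)

theorem beats_D_B_iff (hr : 0 < r) (hhr : h ≤ r - 1) (hv : IsCompletion (vVoter e) v) :
    Beats (addAux h v) .D .B ↔ prefCount v .B .D ≤ h := by
  have hsum := prefCount_add_prefCount_swap (fun i => (hv i).1) (x := .D) (y := .B) (by simp)
  rw [beats_addAux_iff hr hhr, if_neg (by simp [aux1]), if_pos (by trivial)]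
  omega

theorem not_beats_C_P_iff (hr : 0 < r) (hhr : h ≤ r - 1) (hv : IsCompletion (vVoter e) v)
    (j : Fin s) : ¬ Beats (addAux h v) (.C j) .P ↔ ∃ i, v i .P (.C j) := by
  rw [beats_addAux_iff_forall hr hhr (by simp [aux1]) (by simp [aux2]), not_forall]
  refine exists_congr fun i => ?_
  have := (hv i).1
  refine ⟨fun h => ?_, asymm_of (v i)⟩
  exact ((trichotomous_of (v i) _ _).resolve_left h).resolve_left (by simp)

theorem amendWinner_addAux_eq_iff (hr : 3 ≤ r) (hs : 1 ≤ s) (hhr : h ≤ r - 1)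
    (hv : IsCompletion (vVoter e) v) :
    amendWinner (addAux h v) (agenda11 s) = some (.C ⟨0, hs⟩) ↔
      ¬ (prefCount v .B .D ≤ h ∧ ∀ j, ∃ i, v i .P (.C j)) := by
  have hr₀ : 0 < r := by omega
  have hPD (hPC : ∀ j, ∃ i, v i .P (.C j)) : Beats (addAux h v) .P .D := by
    obtain ⟨i, hi⟩ := hPC ⟨0, hs⟩
    exact (beats_addAux_iff_exists hr₀ hhr (by trivial) (by trivial)).2
      ⟨i, prefers_P_D_of_prefers_P_C hv hi⟩
  rw [amendWinner_agenda11_eq_iff hs (fun _ _ => beats_C_C hr hhr hv) (beats_C_B hr hhr hv)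
    (beats_C_D hr₀ hhr hv) (not_beats_P_B hr₀ hhr hv)]
  simp only [beats_D_B_iff hr₀ hhr hv, not_beats_C_P_iff hr₀ hhr hv, and_iff_right_of_imp hPD]

theorem exists_isVertexCover_of_isCompletion (hv : IsCompletion (vVoter e) v)
    (hPC : ∀ j, ∃ i, v i .P (.C j)) :
    ∃ S : Finset (Fin r), S.card = prefCount v .B .D ∧ IsVertexCover e S := by
  refine ⟨Finset.univ.filter fun i => v i .B .D, rfl,
    isVertexCover_iff_forall_exists_inc.2 fun j => ?_⟩
  obtain ⟨i, hi⟩ := hPC j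
  exact ⟨i, by simpa using prefers_B_D_of_prefers_P_C hv hi, inc_of_prefers_P_C hv hi⟩

/-- Position (smaller is better) of each alternative in the completion of the vertex voter of `i`
determined by a set `S` of vertices: the block `b ≻ p` is placed directly above the incident edges
if `i ∈ S`, and at the bottom otherwise. -/
noncomputable def coverRank (e : Fin s → Fin r × Fin r) (S : Finset (Fin r)) (i : Fin r) :
    Alt s → ℕ
  | .C j => if Inc e i j then s + 2 + j else j
  | .D => 2 * s + 2
  | .B => if i ∈ S then s else 2 * s + 3
  | .P => if i ∈ S then s + 1 else 2 * s + 4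

theorem coverRank_injective (e : Fin s → Fin r × Fin r) (S : Finset (Fin r)) (i : Fin r) :
    Function.Injective (coverRank e S i) := by
  intro x y hxy
  cases x <;> cases y <;> simp only [coverRank] at hxy <;> grind

theorem isCompletion_coverRank (e : Fin s → Fin r × Fin r) (S : Finset (Fin r)) :
    IsCompletion (vVoter e) fun i x y => coverRank e S i x < coverRank e S i y := by
  refine fun i => ⟨isStrictTotalOrder_lt_of_injective (coverRank_injective e S i), ?_⟩
  intro x y hxy
  cases x <;> cases y <;> simp only [vVoter, coverRank] at hxy ⊢ <;> grind

theorem exists_isCompletion_of_isVertexCover {S : Finset (Fin r)} (hS : IsVertexCover e S) :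
    ∃ v, IsCompletion (vVoter e) v ∧ prefCount v .B .D ≤ S.card ∧ ∀ j, ∃ i, v i .P (.C j) := by
  refine ⟨_, isCompletion_coverRank e S, prefCount_le_card fun i hBD => ?_, fun j => ?_⟩
  · by_contra hiS
    simp only [coverRank, if_neg hiS] at hBD
    omega
  · obtain ⟨i, hiS, hij⟩ := isVertexCover_iff_forall_exists_inc.1 hS j
    refine ⟨i, ?_⟩
    simp only [coverRank, if_pos hiS, if_pos hij]
    omega

end VertexVoters

theorem stmt12_general (r s h : ℕ) (hr : 3 ≤ r) (hs : 1 ≤ s) (hhr : h ≤ r - 1)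
    (e : Fin s → Fin r × Fin r) :
    (∀ comp, IsCompletion (profile11 r s h e) comp →
      amendWinner comp (agenda11 s) = some (.C ⟨0, hs⟩)) ↔
    ¬ ∃ S : Finset (Fin r), S.card ≤ h ∧ IsVertexCover e S := by
  constructor
  · rintro hwin ⟨S, hSh, hS⟩
    obtain ⟨v, hv, hBD, hPC⟩ := exists_isCompletion_of_isVertexCover hS
    have hc₁ := hwin _ (isCompletion_addAux hv)
    exact (amendWinner_addAux_eq_iff hr hs hhr hv).1 hc₁ ⟨hBD.trans hSh, hPC⟩
  · intro hcover comp hcomp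
    obtain ⟨v, hv, rfl⟩ := exists_isCompletion_eq_addAux (u := vVoter e) hcomp
    rw [amendWinner_addAux_eq_iff hr hs hhr hv]
    rintro ⟨hBD, hPC⟩
    obtain ⟨S, hcard, hS⟩ := exists_isVertexCover_of_isCompletion hv hPC
    exact hcover ⟨S, hcard.trans_le hBD, hS⟩

/-- The edge alternative `c_1` is the amendment winner under the agenda
`b ▷ d ▷ p ▷ c_s ▷ … ▷ c_1` in every completion of the constructed partial profile iff
`G` has no vertex cover of size at most `h`. -/
theorem stmt12 (r s h : ℕ) (hr : 3 ≤ r) (hs : 1 ≤ s) (hh1 : 1 ≤ h) (hhr : h ≤ r - 1)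
    (e : Fin s → Fin r × Fin r) (he : ∀ j, (e j).1 ≠ (e j).2) :
    (∀ comp : Fin (2 * r - 1) → Alt s → Alt s → Prop,
      (∀ idx, IsStrictTotalOrder (Alt s) (comp idx) ∧
        ∀ x y, profile11 r s h e idx x y → comp idx x y) →
      amendWinner comp (agenda11 s) = some (Alt.C ⟨0, hs⟩)) ↔
    ¬ (∃ S : Finset (Fin r), S.card ≤ h ∧ ∀ j, (e j).1 ∈ S ∨ (e j).2 ∈ S) :=
  stmt12_general r s h hr hs hhr e
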